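/- Let d ≥ 1 and let u : ℝ → 𝒮(ℝ^d; ℂ) be a Schwartz solution of the linear Schrödinger equation. Let φ : ℝ^d → ℝ be a bounded continuously differentiable function with sup_{x} |∇φ(x)| ≤ L. Then for every t ≥ 0, ‖φ · u(t)‖_{L²(ℝ^d)} ≤ ‖φ · u(0)‖_{L²(ℝ^d)} + 2 t L ‖∇u(0)‖_{L²(ℝ^d)}. -/

import Mathlib

open MeasureTheory Filter
open scoped RealInnerProductSpace

noncomputable section

abbrev Ed (d : ℕ) : Type := EuclideanSpace ℝ (Fin d)

/-- The `i`-th standard basis vector of `ℝ^d`. -/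
def stdBasis {d : ℕ} (i : Fin d) : Ed d := EuclideanSpace.single i 1

/-- The `i`-th spatial partial derivative. -/
def pd {d : ℕ} (f : Ed d → ℂ) (i : Fin d) (x : Ed d) : ℂ :=
  fderiv ℝ f x (stdBasis i)

/-- The spatial Laplacian. -/
def lap {d : ℕ} (f : Ed d → ℂ) (x : Ed d) : ℂ :=
  ∑ i, pd (pd f i) i x

/-- Squared (Euclidean) pointwise norm of the spatial gradient. -/
def gradNormSq {d : ℕ} (f : Ed d → ℂ) (x : Ed d) : ℝ :=
  ∑ i, ‖pd f i x‖ ^ 2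

/-- `L²` norm of `f` restricted to a set `s`. -/
def L2On {d : ℕ} (s : Set (Ed d)) (f : Ed d → ℂ) : ℝ :=
  (∫ x in s, ‖f x‖ ^ 2) ^ (1/2 : ℝ)

/-- `L²` norm of `f` on all of `ℝ^d`. -/
def L2 {d : ℕ} (f : Ed d → ℂ) : ℝ :=
  (∫ x, ‖f x‖ ^ 2) ^ (1/2 : ℝ)

/-- `L²` norm of the spatial gradient of `f`. -/
def gradL2 {d : ℕ} (f : Ed d → ℂ) : ℝ :=
  (∫ x, gradNormSq f x) ^ (1/2 : ℝ)

/-- Distance between two sets. -/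
def setDist {d : ℕ} (A B : Set (Ed d)) : ℝ :=
  sInf (Set.image2 dist A B)

/-- A Schwartz solution of the linear Schrödinger equation:
smooth in time-space and `∂ₜ u = i Δ u`. -/
def IsLinSchrodSol (d : ℕ) (u : ℝ → SchwartzMap (Ed d) ℂ) : Prop :=
  ContDiff ℝ (⊤ : ℕ∞) (fun p : ℝ × Ed d => u p.1 p.2) ∧
  ∀ t x, deriv (fun s => u s x) t = Complex.I * lap (u t) x

/-- A Schwartz solution of the nonlinear Schrödinger equation with parameters `lam, σ`:
smooth in time-space and `∂ₜ u = i (Δ u + lam |u|^σ u)`. -/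
def IsNLSSol (d : ℕ) (lam σ : ℝ) (u : ℝ → SchwartzMap (Ed d) ℂ) : Prop :=
  ContDiff ℝ (⊤ : ℕ∞) (fun p : ℝ × Ed d => u p.1 p.2) ∧
  ∀ t x, deriv (fun s => u s x) t =
    Complex.I * (lap (u t) x + ((lam * ‖u t x‖ ^ σ : ℝ) : ℂ) * u t x)

/-!
The mass `∫ φ² |u|²` changes at the rate `-4 ∫ φ ∇φ · ⟨u, i∇u⟩`, so by the Cauchy–Schwarz
inequality its square root is Lipschitz in time with constant `2 L ‖∇u‖`, and it remains to see that
`‖∇u(t)‖` is conserved.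

The hypothesis only gives joint smoothness of `(t, x) ↦ u t x` together with spatial decay at each
fixed time, so no decay estimate is locally uniform in time, and integrals over all of space cannot
be differentiated in time directly. For the mass, the weight is first made compactly supported; the
error that this causes in the flux is controlled by a bound on the energy `‖∇u‖²` over the time
interval. Taking `φ = 1`, the mass is conserved on every time interval where the energy is bounded.
There the difference quotients of `u` conserve their mass too, being solutions whose energy is also
bounded, and in the limit the energy itself is conserved. Finally, the energy is a lower
semicontinuous function of time, and by a Baire category argument such a function is constant as
soon as it is constant on every interval on which it is bounded.
-/

open scoped Topology LineDeriv

section LowerSemicontinuous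

lemma exists_eventually_le_of_lowerSemicontinuous {X : Type*} [TopologicalSpace X] [BaireSpace X]
    [Nonempty X] {g : X → ℝ} (hg : LowerSemicontinuous g) :
    ∃ t B, ∀ᶠ s in 𝓝 t, g s ≤ B := by
  obtain ⟨n, t, ht⟩ := nonempty_interior_of_iUnion_of_closed
    (f := fun n : ℕ ↦ g ⁻¹' Set.Iic (n : ℝ))
    (fun n ↦ lowerSemicontinuous_iff_isClosed_preimage.1 hg n)
    (Set.eq_univ_of_forall fun t ↦ Set.mem_iUnion.2 (exists_nat_ge (g t)))
  exact ⟨t, n, mem_interior_iff_mem_nhds.1 ht⟩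

lemma eq_of_forall_uIcc_eventually_eq {α : Type*} {g : ℝ → α} {a b : ℝ}
    (h : ∀ t ∈ Set.uIcc a b, ∀ᶠ s in 𝓝 t, g s = g t) : g a = g b :=
  Set.ordConnected_uIcc.isPreconnected.induction₂ (fun s t ↦ g s = g t)
    (fun t ht ↦ ((h t ht).filter_mono nhdsWithin_le_nhds).mono fun _ hs ↦ hs.symm)
    (fun _ _ _ _ _ _ ↦ Eq.trans) (fun _ _ _ _ ↦ Eq.symm) Set.left_mem_uIcc Set.right_mem_uIcc

variable {g : ℝ → ℝ}

lemma eventually_eq_of_eventually_le {t B : ℝ}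
    (hconst : ∀ a b, BddAbove (g '' Set.uIcc a b) → g a = g b)
    (hB : ∀ᶠ s in 𝓝 t, g s ≤ B) : ∀ᶠ s in 𝓝 t, g s = g t := by
  obtain ⟨ε, hε, hball⟩ := Metric.eventually_nhds_iff_ball.1 hB
  filter_upwards [Metric.ball_mem_nhds t hε] with s hs
  refine hconst s t ⟨B, ?_⟩
  rintro _ ⟨r, hr, rfl⟩
  have : Set.OrdConnected (Metric.ball t ε) := by rw [Real.ball_eq_Ioo]; infer_instance
  exact hball r (this.uIcc_subset hs (Metric.mem_ball_self hε) hr)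

/- Where `g` is locally constant off `K`, its value at `s` is its value at the point of `K` nearest
to `s`. -/
lemma eventually_le_of_eventually_le_nhdsWithin {K : Set ℝ} (hK : IsClosed K) {t B : ℝ}
    (ht : t ∈ K) (hconst : ∀ a b, BddAbove (g '' Set.uIcc a b) → g a = g b)
    (hloc : ∀ s ∉ K, ∀ᶠ r in 𝓝 s, g r = g s) (hB : ∀ᶠ s in 𝓝[K] t, g s ≤ B) :
    ∀ᶠ s in 𝓝 t, g s ≤ B := by
  obtain ⟨ε, hε, hball⟩ := Metric.eventually_nhds_iff_ball.1 (eventually_nhdsWithin_iff.1 hB)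
  filter_upwards [Metric.ball_mem_nhds t (half_pos hε)] with s hs
  obtain ⟨β, hβK, hβ⟩ := hK.exists_infDist_eq_dist ⟨t, ht⟩ s
  have hst : dist s t < ε / 2 := hs
  have hβs : dist s β ≤ dist s t := hβ ▸ Metric.infDist_le_dist_of_mem ht
  have hgβ : g β ≤ B :=
    hball β (by rw [Metric.mem_ball]; linarith [dist_triangle_left β t s]) hβK
  have hoff : ∀ r, dist s r < dist s β → r ∉ K := fun r hr hrK ↦
    hr.not_ge (hβ ▸ Metric.infDist_le_dist_of_mem hrK)
  have hgr : ∀ r ∈ Set.uIcc s β, r ≠ β → g s = g r := by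
    intro r hr hrβ
    have hlt : dist s r < dist s β := by
      rw [Real.dist_eq, Real.dist_eq]
      grind [Set.mem_uIcc]
    exact eq_of_forall_uIcc_eventually_eq fun q hq ↦
      hloc q (hoff q ((Real.dist_left_le_of_mem_uIcc hq).trans_lt hlt))
  rw [hconst s β ⟨max (g s) (g β), ?_⟩]
  · exact hgβ
  · rintro _ ⟨r, hr, rfl⟩
    obtain rfl | hrβ := eq_or_ne r β
    · exact le_max_right _ _
    · exact (hgr r hr hrβ).ge.trans (le_max_left _ _)

theorem eq_of_lowerSemicontinuous_of_bddAbove_imp_eq (hg : LowerSemicontinuous g)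
    (hconst : ∀ a b, BddAbove (g '' Set.uIcc a b) → g a = g b) (a b : ℝ) : g a = g b := by
  let U : Set ℝ := {t | ∀ᶠ s in 𝓝 t, g s = g t}
  suffices hU : U = Set.univ from
    eq_of_forall_uIcc_eventually_eq fun t _ ↦ hU.ge (Set.mem_univ t)
  by_contra hne
  have hUo : IsOpen U := isOpen_iff_mem_nhds.2 fun t ht ↦ by
    filter_upwards [eventually_eventually_nhds.2 ht, ht] with s hs hst
    exact hs.mono fun r hr ↦ hr.trans hst.symm
  have hKc : IsClosed Uᶜ := hUo.isClosed_compl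
  have : Nonempty ↥Uᶜ := (Set.nonempty_compl.2 hne).to_subtype
  have : CompleteSpace ↥Uᶜ := hKc.completeSpace_coe
  obtain ⟨⟨t, ht⟩, B, hB⟩ := exists_eventually_le_of_lowerSemicontinuous
    (hg.comp (continuous_subtype_val (p := (· ∈ Uᶜ))))
  have hBK : ∀ᶠ s in 𝓝[Uᶜ] t, g s ≤ B := (eventually_nhds_subtype_iff _ ⟨t, ht⟩ _).1 hB
  exact ht (eventually_eq_of_eventually_le hconst
    (eventually_le_of_eventually_le_nhdsWithin hKc ht hconst (fun s hs ↦ not_not.1 hs) hBK))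

end LowerSemicontinuous

section ParametricIntegrals

variable {T X : Type*} [TopologicalSpace T] [TopologicalSpace X] [MeasurableSpace X]
  [OpensMeasurableSpace X] {μ : Measure X}

lemma lowerSemicontinuous_integral_of_nonneg [FirstCountableTopology T] [LocallyCompactSpace T]
    [T2Space X] [SigmaCompactSpace X] [IsLocallyFiniteMeasure μ] {F : T → X → ℝ}
    (hF : Continuous F.uncurry) (hF0 : ∀ t x, 0 ≤ F t x) (hFi : ∀ t, Integrable (F t) μ) :
    LowerSemicontinuous fun t ↦ ∫ x, F t x ∂μ := by
  let K : ℕ → Set X := compactCovering X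
  have hle_iff : ∀ t c, ∫ x, F t x ∂μ ≤ c ↔ ∀ n, ∫ x in K n, F t x ∂μ ≤ c := by
    intro t c
    have hlim : Tendsto (fun n ↦ ∫ x in K n, F t x ∂μ) atTop (𝓝 (∫ x, F t x ∂μ)) := by
      have := tendsto_setIntegral_of_monotone
        (fun n ↦ (isCompact_compactCovering X n).measurableSet)
        (fun _ _ h ↦ compactCovering_subset X h) (hFi t).integrableOn
      rwa [iUnion_compactCovering, setIntegral_univ] at this
    exact ⟨fun h n ↦ (setIntegral_le_integral (hFi t) (.of_forall (hF0 t))).trans h,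
      le_of_tendsto' hlim⟩
  refine lowerSemicontinuous_iff_isClosed_preimage.2 fun c ↦ ?_
  simp only [Set.preimage, Set.mem_Iic, hle_iff, Set.ofPred_forall]
  exact isClosed_iInter fun n ↦ isClosed_le
    (continuous_parametric_integral_of_continuous hF (isCompact_compactCovering X n))
    continuous_const

lemma hasDerivAt_integral_mul_of_hasCompactSupport [IsFiniteMeasureOnCompacts μ]
    {g : X → ℝ} {F F' : ℝ → X → ℝ} (hg : Continuous g) (hgc : HasCompactSupport g)
    (hF : ∀ s, Continuous (F s)) (hF' : Continuous F'.uncurry)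
    (hFF' : ∀ s x, HasDerivAt (F · x) (F' s x) s) (t : ℝ) :
    HasDerivAt (fun s ↦ ∫ x, g x * F s x ∂μ) (∫ x, g x * F' t x ∂μ) t := by
  have hcont : Continuous fun p : ℝ × X ↦ g p.2 * F' p.1 p.2 :=
    (hg.comp continuous_snd).mul hF'
  obtain ⟨C, hC⟩ := ((isCompact_closedBall t 1).prod hgc.isCompact).exists_bound_of_continuousOn
    hcont.continuousOn
  have hgF : ∀ s, Continuous fun x ↦ g x * F s x := fun s ↦ hg.mul (hF s)
  refine (hasDerivAt_integral_of_dominated_loc_of_deriv_le (F := fun s x ↦ g x * F s x)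
    (F' := fun s x ↦ g x * F' s x) (bound := (tsupport g).indicator fun _ ↦ C)
    (Metric.closedBall_mem_nhds t one_pos) (.of_forall fun s ↦ (hgF s).aestronglyMeasurable)
    ((hgF t).integrable_of_hasCompactSupport hgc.mul_right)
    (hcont.comp (Continuous.prodMk_right t)).aestronglyMeasurable (.of_forall fun x s hs ↦ ?_)
    ?_ (.of_forall fun x s _ ↦ (hFF' s x).const_mul _)).2
  · by_cases hx : x ∈ tsupport g
    · rw [Set.indicator_of_mem hx]
      exact hC (s, x) ⟨hs, hx⟩
    · simp [image_eq_zero_of_notMem_tsupport hx, hx]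
  · rw [integrable_indicator_iff (isClosed_tsupport g).measurableSet]
    exact integrableOn_const hgc.isCompact.measure_lt_top.ne

end ParametricIntegrals

lemma integral_mul_le_sqrt_mul_sqrt {X : Type*} [MeasurableSpace X] {μ : Measure X} {f g : X → ℝ}
    (hf0 : 0 ≤ f) (hg0 : 0 ≤ g) (hf : MemLp f 2 μ) (hg : MemLp g 2 μ) :
    ∫ x, f x * g x ∂μ ≤ √(∫ x, f x ^ 2 ∂μ) * √(∫ x, g x ^ 2 ∂μ) := by
  simpa [Real.sqrt_eq_rpow] using integral_mul_le_Lp_mul_Lq_of_nonneg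
    Real.HolderConjugate.two_two (.of_forall hf0) (.of_forall hg0)
    (by simpa using hf) (by simpa using hg)

/- The square root is not differentiable at `0`, so one differentiates `√(m + ε)` and lets
`ε → 0`. -/
lemma abs_sqrt_sub_sqrt_le_of_abs_deriv_le {m m' : ℝ → ℝ} {a b K : ℝ} (hab : a ≤ b) (hK : 0 ≤ K)
    (hm0 : ∀ s ∈ Set.Icc a b, 0 ≤ m s)
    (hm : ∀ s ∈ Set.Icc a b, HasDerivWithinAt m (m' s) (Set.Icc a b) s)
    (hm' : ∀ s ∈ Set.Icc a b, |m' s| ≤ 2 * K * √(m s)) :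
    |√(m b) - √(m a)| ≤ K * (b - a) := by
  have hε : ∀ ε > 0, |√(m b + ε) - √(m a + ε)| ≤ K * (b - a) := by
    intro ε hε
    refine norm_image_sub_le_of_norm_deriv_le_segment' (f := fun s ↦ √(m s + ε))
      (fun s hs ↦ ((hm s hs).add_const ε).sqrt (by linarith [hm0 s hs])) (fun s hs ↦ ?_)
      b (Set.right_mem_Icc.2 hab)
    have hs' := Set.Ico_subset_Icc_self hs
    have hpos : 0 < √(m s + ε) := Real.sqrt_pos.2 (by linarith [hm0 s hs'])
    rw [Real.norm_eq_abs, abs_div, abs_of_pos (by positivity : 0 < 2 * √(m s + ε)),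
      div_le_iff₀ (by positivity)]
    calc |m' s| ≤ 2 * K * √(m s) := hm' s hs'
      _ ≤ 2 * K * √(m s + ε) := by gcongr; linarith
      _ = K * (2 * √(m s + ε)) := by ring
  have hlim : Tendsto (fun ε : ℝ ↦ |√(m b + ε) - √(m a + ε)|) (𝓝[>] 0)
      (𝓝 |√(m b + 0) - √(m a + 0)|) :=
    tendsto_nhdsWithin_of_tendsto_nhds (Continuous.tendsto (by fun_prop) 0)
  simp only [add_zero] at hlim
  exact le_of_tendsto hlim (eventually_mem_nhdsWithin.mono hε)

section Cutoff

variable {E : Type*} [NormedAddCommGroup E] [NormedSpace ℝ E] [HasContDiffBump E]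

/-- A smooth spatial cutoff at scale `R`: a fixed bump function, equal to `1` on the unit ball and
supported in the ball of radius `2`, evaluated at `R⁻¹ • x`. -/
def cutoff (R : ℝ) (x : E) : ℝ :=
  (⟨1, 2, one_pos, one_lt_two⟩ : ContDiffBump (0 : E)) (R⁻¹ • x)

lemma abs_cutoff_le_one (R : ℝ) (x : E) : |cutoff R x| ≤ 1 := by
  rw [cutoff, abs_of_nonneg (ContDiffBump.nonneg _)]
  exact ContDiffBump.le_one _

lemma tendsto_cutoff_atTop (x : E) : Tendsto (fun R ↦ cutoff R x) atTop (𝓝 1) := by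
  refine tendsto_const_nhds.congr' ?_
  filter_upwards [eventually_ge_atTop ‖x‖, eventually_gt_atTop 0] with R hxR hR
  refine (ContDiffBump.one_of_mem_closedBall _ ?_).symm
  rw [mem_closedBall_zero_iff, norm_smul, norm_inv, Real.norm_of_nonneg hR.le, inv_mul_le_iff₀ hR]
  simpa using hxR

lemma contDiff_cutoff (R : ℝ) : ContDiff ℝ 1 (cutoff R : E → ℝ) :=
  (ContDiffBump.contDiff _).comp (contDiff_const_smul _)

lemma hasCompactSupport_cutoff [FiniteDimensional ℝ E] {R : ℝ} (hR : R ≠ 0) :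
    HasCompactSupport (cutoff R : E → ℝ) :=
  (ContDiffBump.hasCompactSupport _).comp_homeomorph (Homeomorph.smulOfNeZero _ (inv_ne_zero hR))

variable (E) in
lemma exists_norm_fderiv_cutoff_le [FiniteDimensional ℝ E] :
    ∃ D, ∀ R > 0, ∀ x : E, ‖fderiv ℝ (cutoff R) x‖ ≤ D / R := by
  let f : ContDiffBump (0 : E) := ⟨1, 2, one_pos, one_lt_two⟩
  obtain ⟨D, hD⟩ := (f.contDiff.continuous_fderiv one_ne_zero).bounded_above_of_compact_support
    (f.hasCompactSupport.fderiv ℝ)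
  refine ⟨D, fun R hR x ↦ ?_⟩
  have hfderiv : fderiv ℝ (cutoff R) x = R⁻¹ • fderiv ℝ f (R⁻¹ • x) :=
    fderiv_comp_smul R⁻¹
  rw [hfderiv, norm_smul, norm_inv, Real.norm_of_nonneg hR.le, div_eq_inv_mul]
  exact mul_le_mul_of_nonneg_left (hD _) (inv_nonneg.2 hR.le)

/-- The compactly supported approximation at scale `R` of a weight `φ`. The values of `φ` are first
made bounded by `R` through `R * sin (φ / R)`, which does not increase the gradient, and then cut
off at the larger scale `R ^ 2`, so that the cutoff adds only `O(R⁻¹)` to the gradient. -/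
def truncatedWeight (φ : E → ℝ) (R : ℝ) (x : E) : ℝ :=
  cutoff (R ^ 2) x * (R * Real.sin (φ x / R))

lemma hasCompactSupport_truncatedWeight [FiniteDimensional ℝ E] (φ : E → ℝ) {R : ℝ}
    (hR : R ≠ 0) :
    HasCompactSupport (truncatedWeight φ R) :=
  (hasCompactSupport_cutoff (pow_ne_zero 2 hR)).mul_right

lemma contDiff_truncatedWeight {φ : E → ℝ} (hφ : ContDiff ℝ 1 φ) (R : ℝ) :
    ContDiff ℝ 1 (truncatedWeight φ R) :=
  (contDiff_cutoff _).mul (contDiff_const.mul (Real.contDiff_sin.comp (hφ.div_const R)))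

lemma abs_truncatedWeight_le (φ : E → ℝ) {R : ℝ} (hR : 0 < R) (x : E) :
    |truncatedWeight φ R x| ≤ |φ x| := by
  have hsin : |R * Real.sin (φ x / R)| ≤ |φ x| := by
    calc |R * Real.sin (φ x / R)| = R * |Real.sin (φ x / R)| := by rw [abs_mul, abs_of_pos hR]
      _ ≤ R * |φ x / R| := mul_le_mul_of_nonneg_left Real.abs_sin_le_abs hR.le
      _ = |φ x| := by rw [abs_div, abs_of_pos hR, mul_div_cancel₀ _ hR.ne']
  rw [truncatedWeight, abs_mul]
  exact (mul_le_of_le_one_left (abs_nonneg _) (abs_cutoff_le_one _ x)).trans hsin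

lemma tendsto_truncatedWeight_atTop (φ : E → ℝ) (x : E) :
    Tendsto (fun R ↦ truncatedWeight φ R x) atTop (𝓝 (φ x)) := by
  have hsinc : Tendsto (fun R : ℝ ↦ φ x * Real.sinc (φ x / R)) atTop (𝓝 (φ x)) := by
    simpa using ((Real.continuous_sinc.tendsto 0).comp
      (tendsto_const_nhds.div_atTop tendsto_id)).const_mul (φ x)
  have hsin : Tendsto (fun R ↦ R * Real.sin (φ x / R)) atTop (𝓝 (φ x)) := by
    refine hsinc.congr' ?_
    filter_upwards [eventually_ne_atTop 0] with R hR
    obtain hφ | hφ := eq_or_ne (φ x) 0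
    · simp [hφ]
    · rw [Real.sinc_of_ne_zero (div_ne_zero hφ hR)]
      field_simp
  have hcutoff := (tendsto_cutoff_atTop x).comp (tendsto_pow_atTop (α := ℝ) two_ne_zero)
  simpa [truncatedWeight] using hcutoff.mul hsin

lemma exists_norm_fderiv_truncatedWeight_le [FiniteDimensional ℝ E] {φ : E → ℝ} {L : ℝ}
    (hφ : Differentiable ℝ φ) (hL : ∀ x, ‖fderiv ℝ φ x‖ ≤ L) :
    ∃ D, ∀ R > 0, ∀ x, ‖fderiv ℝ (truncatedWeight φ R) x‖ ≤ L + D / R := by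
  obtain ⟨D, hD⟩ := exists_norm_fderiv_cutoff_le E
  refine ⟨D, fun R hR x ↦ ?_⟩
  have hsin : HasFDerivAt (fun y ↦ R * Real.sin (φ y / R))
      (Real.cos (φ x / R) • fderiv ℝ φ x) x := by
    have h := ((hφ x).hasFDerivAt.mul_const R⁻¹).sin.const_mul R
    rwa [smul_comm (Real.cos _) R⁻¹, smul_inv_smul₀ hR.ne'] at h
  have hχ : HasFDerivAt (cutoff (R ^ 2)) (fderiv ℝ (cutoff (R ^ 2)) x) x :=
    ((contDiff_cutoff _).differentiable one_ne_zero x).hasFDerivAt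
  have hprod : HasFDerivAt (truncatedWeight φ R) _ x := hχ.mul hsin
  rw [hprod.fderiv]
  have h₁ : ‖cutoff (R ^ 2) x • Real.cos (φ x / R) • fderiv ℝ φ x‖ ≤ L := by
    rw [norm_smul, norm_smul]
    refine (mul_le_of_le_one_left (by positivity) (abs_cutoff_le_one _ x)).trans ?_
    exact (mul_le_of_le_one_left (norm_nonneg _) (Real.abs_cos_le_one _)).trans (hL x)
  have h₂ : ‖(R * Real.sin (φ x / R)) • fderiv ℝ (cutoff (R ^ 2)) x‖ ≤ D / R := by
    rw [norm_smul, norm_mul, Real.norm_of_nonneg hR.le, Real.norm_eq_abs]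
    calc R * |Real.sin (φ x / R)| * ‖fderiv ℝ (cutoff (R ^ 2)) x‖
        ≤ R * 1 * (D / R ^ 2) := by
          gcongr
          exacts [Real.abs_sin_le_one _, hD _ (by positivity) x]
      _ = D / R := by field_simp
  exact (norm_add_le _ _).trans (add_le_add h₁ h₂)

end Cutoff

lemma integrable_of_hasCompactSupport_of_imp_eq_zero {X : Type*} [TopologicalSpace X]
    [MeasurableSpace X] [OpensMeasurableSpace X] {μ : Measure X} [IsFiniteMeasureOnCompacts μ]
    {ψ g : X → ℝ} (hψ : HasCompactSupport ψ) (hg : Continuous g) (h : ∀ x, ψ x = 0 → g x = 0) :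
    Integrable g μ :=
  hg.integrable_of_hasCompactSupport (hψ.mono fun x hx hψx ↦ hx (h x hψx))

section MassFlux

lemma inner_I_mul_self (w : ℂ) : ⟪w, Complex.I * w⟫ = 0 := by
  simp [Complex.inner, Complex.mul_re, mul_comm]

variable {E : Type*} [NormedAddCommGroup E] [NormedSpace ℝ E] {f : E → ℂ}

lemma contDiff_fderiv_apply (hf : ContDiff ℝ 2 f) (v : E) :
    ContDiff ℝ 1 fun x ↦ fderiv ℝ f x v :=
  (hf.fderiv_right (m := 1) le_rfl).clm_apply contDiff_const

lemma contDiff_inner_I_mul_fderiv (hf : ContDiff ℝ 2 f) (v : E) :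
    ContDiff ℝ 1 fun x ↦ ⟪f x, Complex.I * fderiv ℝ f x v⟫ :=
  (hf.of_le one_le_two).inner ℝ (contDiff_const.mul (contDiff_fderiv_apply hf v))

lemma fderiv_inner_I_mul_fderiv (hf : ContDiff ℝ 2 f) (v x : E) :
    fderiv ℝ (fun y ↦ ⟪f y, Complex.I * fderiv ℝ f y v⟫) x v =
      ⟪f x, Complex.I * fderiv ℝ (fun y ↦ fderiv ℝ f y v) x v⟫ := by
  have hf' : DifferentiableAt ℝ (fun y ↦ fderiv ℝ f y v) x :=
    (contDiff_fderiv_apply hf v).differentiable one_ne_zero x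
  rw [fderiv_inner_apply ℝ (hf.differentiable two_ne_zero x) (hf'.const_mul _),
    fderiv_const_mul hf', inner_I_mul_self, add_zero]
  rfl

lemma integral_sq_mul_inner_I_mul_fderiv_fderiv [FiniteDimensional ℝ E] [MeasurableSpace E]
    [BorelSpace E] {μ : Measure E} [μ.IsAddHaarMeasure] (hf : ContDiff ℝ 2 f) {ψ : E → ℝ}
    (hψ : ContDiff ℝ 1 ψ) (hψc : HasCompactSupport ψ) (v : E) :
    ∫ x, ψ x ^ 2 * ⟪f x, Complex.I * fderiv ℝ (fun y ↦ fderiv ℝ f y v) x v⟫ ∂μ =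
      -∫ x, 2 * (ψ x * (fderiv ℝ ψ x v * ⟪f x, Complex.I * fderiv ℝ f x v⟫)) ∂μ := by
  have hψd : Differentiable ℝ ψ := hψ.differentiable one_ne_zero
  have hJ := contDiff_inner_I_mul_fderiv hf v
  have hψ2 : ∀ x, fderiv ℝ (fun y ↦ ψ y ^ 2) x v = 2 * (ψ x * fderiv ℝ ψ x v) := fun x ↦ by
    rw [((hψd x).hasFDerivAt.pow 2).fderiv]
    simp [mul_assoc]
  have hψcont : Continuous ψ := hψ.continuous
  have hJcont := hJ.continuous
  have hJ'cont := (hJ.continuous_fderiv one_ne_zero).clm_apply (continuous_const (y := v))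
  simp_rw [← fderiv_inner_I_mul_fderiv hf]
  rw [integral_mul_fderiv_eq_neg_fderiv_mul_of_integrable]
  · simp only [hψ2, mul_assoc]
  · simp only [hψ2]
    exact integrable_of_hasCompactSupport_of_imp_eq_zero hψc (by fun_prop) (by simp +contextual)
  · exact integrable_of_hasCompactSupport_of_imp_eq_zero hψc (by fun_prop) (by simp +contextual)
  · exact integrable_of_hasCompactSupport_of_imp_eq_zero hψc (by fun_prop) (by simp +contextual)
  · exact fun x _ ↦ (hψd x).pow 2
  · exact fun x _ ↦ hJ.differentiable one_ne_zero x

variable {d : ℕ} {f : Ed d → ℂ}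

/-- The mass `∫ ψ² |f|²` of `f` seen through the weight `ψ`. -/
def localizedMass (ψ : Ed d → ℝ) (f : Ed d → ℂ) : ℝ :=
  ∫ x, ψ x ^ 2 * ‖f x‖ ^ 2

/-- The gradient energy `∫ |∇f|²`, the square of `gradL2 f`. -/
def gradEnergy (f : Ed d → ℂ) : ℝ :=
  ∫ x, gradNormSq f x

lemma localizedMass_nonneg (ψ : Ed d → ℝ) (f : Ed d → ℂ) : 0 ≤ localizedMass ψ f :=
  integral_nonneg fun _ ↦ by positivity

lemma gradNormSq_nonneg (f : Ed d → ℂ) (x : Ed d) : 0 ≤ gradNormSq f x :=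
  Finset.sum_nonneg fun _ _ ↦ sq_nonneg _

lemma continuous_gradNormSq (hf : ContDiff ℝ 2 f) : Continuous (gradNormSq f) :=
  continuous_finsetSum _ fun i _ ↦ (contDiff_fderiv_apply hf (stdBasis i)).continuous.norm.pow 2

lemma abs_sum_mul_inner_I_mul_pd_le (A : Ed d →L[ℝ] ℝ) (f : Ed d → ℂ) (x : Ed d) :
    |∑ i, A (stdBasis i) * ⟪f x, Complex.I * pd f i x⟫| ≤
      ‖A‖ * (‖f x‖ * √(gradNormSq f x)) := by
  let c : Ed d := WithLp.toLp 2 fun i ↦ ⟪f x, Complex.I * pd f i x⟫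
  have hc : c = ∑ i, c i • (stdBasis i : Ed d) := by
    ext j
    simp [stdBasis, Pi.single_apply]
  have hAc : A c = ∑ i, A (stdBasis i) * ⟪f x, Complex.I * pd f i x⟫ := by
    rw [hc, map_sum]
    exact Finset.sum_congr rfl fun i _ ↦ by rw [map_smul, smul_eq_mul, mul_comm]
  have hc_norm : ‖c‖ ≤ ‖f x‖ * √(gradNormSq f x) := by
    rw [EuclideanSpace.norm_eq]
    refine Real.sqrt_le_iff.2 ⟨by positivity, ?_⟩
    rw [mul_pow, Real.sq_sqrt (gradNormSq_nonneg f x), gradNormSq, Finset.mul_sum]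
    refine Finset.sum_le_sum fun i _ ↦ ?_
    rw [← mul_pow]
    exact pow_le_pow_left₀ (norm_nonneg _) ((norm_inner_le_norm _ _).trans (by simp)) 2
  rw [← hAc]
  exact (A.le_opNorm c).trans (mul_le_mul_of_nonneg_left hc_norm (norm_nonneg A))

lemma integral_sq_mul_inner_I_mul_lap (hf : ContDiff ℝ 2 f) {ψ : Ed d → ℝ}
    (hψ : ContDiff ℝ 1 ψ) (hψc : HasCompactSupport ψ) :
    ∫ x, ψ x ^ 2 * ⟪f x, Complex.I * lap f x⟫ =
      -∫ x, 2 * (ψ x * ∑ i, fderiv ℝ ψ x (stdBasis i) * ⟪f x, Complex.I * pd f i x⟫) := by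
  have hψcont : Continuous ψ := hψ.continuous
  have hψ'cont : ∀ i : Fin d, Continuous fun x ↦ fderiv ℝ ψ x (stdBasis i) := fun i ↦
    (hψ.continuous_fderiv one_ne_zero).clm_apply continuous_const
  have hJcont : ∀ i, Continuous fun x ↦ ⟪f x, Complex.I * pd f i x⟫ := fun i ↦
    (contDiff_inner_I_mul_fderiv hf _).continuous
  have hJ'cont : ∀ i, Continuous fun x ↦ ⟪f x, Complex.I * pd (pd f i) i x⟫ := fun i ↦
    hf.continuous.inner (continuous_const.mul
      (((contDiff_fderiv_apply hf _).continuous_fderiv one_ne_zero).clm_apply continuous_const))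
  simp_rw [lap, Finset.mul_sum, inner_sum, Finset.mul_sum]
  rw [integral_finsetSum, integral_finsetSum, ← Finset.sum_neg_distrib]
  · exact Finset.sum_congr rfl fun i _ ↦ integral_sq_mul_inner_I_mul_fderiv_fderiv hf hψ hψc _
  · intro i _
    have := hψ'cont i
    have := hJcont i
    exact integrable_of_hasCompactSupport_of_imp_eq_zero hψc (by fun_prop) (by simp +contextual)
  · intro i _
    have := hJ'cont i
    exact integrable_of_hasCompactSupport_of_imp_eq_zero hψc (by fun_prop) (by simp +contextual)

lemma integral_abs_mul_norm_mul_sqrt_gradNormSq_le (hf : ContDiff ℝ 2 f)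
    (hf' : Integrable (gradNormSq f)) {ψ : Ed d → ℝ} (hψ : Continuous ψ)
    (hψc : HasCompactSupport ψ) :
    ∫ x, |ψ x| * ‖f x‖ * √(gradNormSq f x) ≤ √(localizedMass ψ f) * √(gradEnergy f) := by
  have hfcont := hf.continuous
  have hgrad := (continuous_gradNormSq hf).sqrt
  have hsq : ∀ x, √(gradNormSq f x) ^ 2 = gradNormSq f x := fun x ↦
    Real.sq_sqrt (gradNormSq_nonneg f x)
  have hmass : Integrable fun x ↦ (|ψ x| * ‖f x‖) ^ 2 :=
    integrable_of_hasCompactSupport_of_imp_eq_zero hψc (by fun_prop) (by simp +contextual)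
  have := integral_mul_le_sqrt_mul_sqrt (μ := volume) (f := fun x ↦ |ψ x| * ‖f x‖)
    (g := fun x ↦ √(gradNormSq f x)) (fun x ↦ by positivity) (fun x ↦ by positivity)
    ((memLp_two_iff_integrable_sq (by fun_prop)).2 hmass)
    ((memLp_two_iff_integrable_sq hgrad.aestronglyMeasurable).2 (by simpa only [hsq] using hf'))
  simpa only [hsq, mul_pow, sq_abs, localizedMass, gradEnergy] using this

lemma abs_integral_sq_mul_inner_I_mul_lap_le (hf : ContDiff ℝ 2 f)
    (hf' : Integrable (gradNormSq f)) {ψ : Ed d → ℝ} (hψ : ContDiff ℝ 1 ψ)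
    (hψc : HasCompactSupport ψ) {Λ : ℝ} (hΛ : ∀ x, ‖fderiv ℝ ψ x‖ ≤ Λ) :
    |∫ x, ψ x ^ 2 * ⟪f x, Complex.I * lap f x⟫| ≤
      2 * Λ * (√(localizedMass ψ f) * √(gradEnergy f)) := by
  have hfcont := hf.continuous
  have hψcont := hψ.continuous
  have hgrad := (continuous_gradNormSq hf).sqrt
  have hflux : ∀ x, ‖2 * (ψ x * ∑ i, fderiv ℝ ψ x (stdBasis i) * ⟪f x, Complex.I * pd f i x⟫)‖ ≤
      2 * Λ * (|ψ x| * ‖f x‖ * √(gradNormSq f x)) := by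
    intro x
    rw [norm_mul, norm_mul, Real.norm_two, Real.norm_eq_abs, Real.norm_eq_abs]
    calc _ ≤ 2 * (|ψ x| * (Λ * (‖f x‖ * √(gradNormSq f x)))) := by
          gcongr
          exact (abs_sum_mul_inner_I_mul_pd_le _ f x).trans (by gcongr; exact hΛ x)
      _ = _ := by ring
  rw [integral_sq_mul_inner_I_mul_lap hf hψ hψc, abs_neg]
  refine (norm_integral_le_of_norm_le (Integrable.const_mul ?_ _) (.of_forall hflux)).trans ?_
  · exact integrable_of_hasCompactSupport_of_imp_eq_zero hψc (by fun_prop) (by simp +contextual)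
  · rw [integral_const_mul]
    exact mul_le_mul_of_nonneg_left
      (integral_abs_mul_norm_mul_sqrt_gradNormSq_le hf hf' hψcont hψc)
      (mul_nonneg zero_le_two ((norm_nonneg _).trans (hΛ 0)))

end MassFlux

lemma tendsto_localizedMass_truncatedWeight {d : ℕ} {f : Ed d → ℂ} {φ : Ed d → ℝ}
    (hf : Continuous f) (hφ : ContDiff ℝ 1 φ) (hint : Integrable fun x ↦ φ x ^ 2 * ‖f x‖ ^ 2) :
    Tendsto (fun R ↦ localizedMass (truncatedWeight φ R) f) atTop (𝓝 (localizedMass φ f)) := by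
  refine tendsto_integral_filter_of_dominated_convergence _ (.of_forall fun R ↦ ?_)
    ?_ hint (.of_forall fun x ↦ ((tendsto_truncatedWeight_atTop φ x).pow 2).mul_const _)
  · have := (contDiff_truncatedWeight hφ R).continuous
    exact Continuous.aestronglyMeasurable (by fun_prop)
  · filter_upwards [eventually_gt_atTop 0] with R hR
    refine .of_forall fun x ↦ ?_
    rw [Real.norm_of_nonneg (by positivity)]
    exact mul_le_mul_of_nonneg_right (sq_le_sq.2 (abs_truncatedWeight_le φ hR x)) (sq_nonneg _)

section Schwartz

variable {E F : Type*} [NormedAddCommGroup E] [NormedSpace ℝ E] [NormedAddCommGroup F]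
  [NormedSpace ℝ F]

lemma sq_le_of_norm_fderiv_le {φ : E → ℝ} {L : ℝ} (hφ : Differentiable ℝ φ)
    (hL : ∀ x, ‖fderiv ℝ φ x‖ ≤ L) (x : E) :
    φ x ^ 2 ≤ 2 * φ 0 ^ 2 + 2 * L ^ 2 * ‖x‖ ^ 2 := by
  have hdiff : |φ x - φ 0| ≤ L * ‖x‖ := by
    simpa using convex_univ.norm_image_sub_le_of_norm_fderiv_le (fun y _ ↦ hφ y)
      (fun y _ ↦ hL y) (Set.mem_univ 0) (Set.mem_univ x)
  calc φ x ^ 2 = (φ 0 + (φ x - φ 0)) ^ 2 := by ring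
    _ ≤ 2 * (φ 0 ^ 2 + (φ x - φ 0) ^ 2) := add_sq_le
    _ ≤ 2 * (φ 0 ^ 2 + (L * ‖x‖) ^ 2) := by
        gcongr 2 * (_ + ?_)
        exact sq_le_sq' (abs_le.1 hdiff).1 (abs_le.1 hdiff).2
    _ = 2 * φ 0 ^ 2 + 2 * L ^ 2 * ‖x‖ ^ 2 := by ring

variable [MeasurableSpace E] [BorelSpace E] [SecondCountableTopology E] {μ : Measure E}
  [μ.HasTemperateGrowth]

lemma integrable_sq_norm (f : SchwartzMap E F) : Integrable (fun x ↦ ‖f x‖ ^ 2) μ := by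
  simpa using (f.memLp 2 μ).integrable_norm_pow two_ne_zero

lemma integrable_sq_norm_mul_sq_norm (f : SchwartzMap E F) :
    Integrable (fun x ↦ ‖x‖ ^ 2 * ‖f x‖ ^ 2) μ := by
  refine ((f.integrable_pow_mul μ 2).mul_const (SchwartzMap.seminorm ℝ 0 0 f)).mono'
    ((continuous_norm.pow 2).mul (f.continuous.norm.pow 2)).aestronglyMeasurable
    (.of_forall fun x ↦ ?_)
  rw [Real.norm_of_nonneg (by positivity), sq ‖f x‖, ← mul_assoc]
  gcongr
  exact f.norm_le_seminorm ℝ x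

lemma integrable_sq_mul_sq_norm (f : SchwartzMap E F) {φ : E → ℝ} {L : ℝ}
    (hφ : Differentiable ℝ φ) (hL : ∀ x, ‖fderiv ℝ φ x‖ ≤ L) :
    Integrable (fun x ↦ φ x ^ 2 * ‖f x‖ ^ 2) μ := by
  refine (((integrable_sq_norm f).const_mul (2 * φ 0 ^ 2)).add
    ((integrable_sq_norm_mul_sq_norm f).const_mul (2 * L ^ 2))).mono'
    ((hφ.continuous.pow 2).mul (f.continuous.norm.pow 2)).aestronglyMeasurable
    (.of_forall fun x ↦ ?_)
  rw [Real.norm_of_nonneg (by positivity), Pi.add_apply, ← mul_assoc, ← add_mul]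
  exact mul_le_mul_of_nonneg_right (sq_le_of_norm_fderiv_le hφ hL x) (sq_nonneg _)

lemma integrable_gradNormSq {d : ℕ} (f : SchwartzMap (Ed d) ℂ) : Integrable (gradNormSq f) :=
  integrable_finsetSum _ fun i _ ↦ integrable_sq_norm (∂_{stdBasis i} f)

lemma gradEnergy_eq_sum {d : ℕ} (f : SchwartzMap (Ed d) ℂ) :
    gradEnergy f = ∑ i, ∫ x, ‖pd f i x‖ ^ 2 :=
  integral_finsetSum _ fun i _ ↦ integrable_sq_norm (∂_{stdBasis i} f)

end Schwartz

section DifferenceQuotients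

variable {E F : Type*} [NormedAddCommGroup E] [NormedSpace ℝ E] [NormedAddCommGroup F]
  [NormedSpace ℝ F]

/-- The forward difference `x ↦ f (x + e) - f x` as a Schwartz function; compare `fwdDiff`. -/
def schwartzFwdDiff (e : E) (f : SchwartzMap E F) : SchwartzMap E F :=
  SchwartzMap.compSubConstCLM ℝ (-e) f - f

lemma schwartzFwdDiff_apply (e : E) (f : SchwartzMap E F) (x : E) :
    schwartzFwdDiff e f x = f (x + e) - f x := by
  simp [schwartzFwdDiff]

lemma lineDerivOp_schwartzFwdDiff (e v : E) (f : SchwartzMap E F) :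
    ∂_{v} (schwartzFwdDiff e f) = schwartzFwdDiff e (∂_{v} f) := by
  have hcoe : ⇑(schwartzFwdDiff e f) = fun y ↦ f (y + e) - f y :=
    funext (schwartzFwdDiff_apply e f)
  ext x
  have hshift : DifferentiableAt ℝ (fun y ↦ f (y + e)) x :=
    f.differentiableAt.comp x (differentiableAt_id.add_const e)
  simp only [schwartzFwdDiff_apply, SchwartzMap.lineDerivOp_apply_eq_fderiv, hcoe]
  rw [fderiv_fun_sub hshift f.differentiableAt, fderiv_comp_add_right]
  rfl

lemma exists_norm_fderiv_le_inv_pow (f : SchwartzMap E F) (k : ℕ) :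
    ∃ C, 0 ≤ C ∧ ∀ x, ‖fderiv ℝ f x‖ ≤ C * ((1 + ‖x‖) ^ k)⁻¹ := by
  refine ⟨2 ^ k * ((Finset.Iic (k, 1)).sup fun m ↦ SchwartzMap.seminorm ℝ m.1 m.2) f,
    by positivity, fun x ↦ ?_⟩
  rw [← div_eq_mul_inv, le_div_iff₀' (by positivity), ← norm_iteratedFDeriv_one]
  exact SchwartzMap.one_add_le_sup_seminorm_apply (m := (k, 1)) le_rfl le_rfl f x

lemma exists_norm_schwartzFwdDiff_le (f : SchwartzMap E F) (k : ℕ) :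
    ∃ C, ∀ e : E, ‖e‖ ≤ 1 → ∀ x, ‖schwartzFwdDiff e f x‖ ≤ C * ((1 + ‖x‖) ^ k)⁻¹ * ‖e‖ := by
  obtain ⟨C, hC0, hC⟩ := exists_norm_fderiv_le_inv_pow f k
  refine ⟨C * 2 ^ k, fun e he x ↦ ?_⟩
  have hball : ∀ y ∈ Metric.closedBall x 1,
      ‖fderiv ℝ f y‖ ≤ C * 2 ^ k * ((1 + ‖x‖) ^ k)⁻¹ := by
    intro y hy
    have hxy : 1 + ‖x‖ ≤ 2 * (1 + ‖y‖) := by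
      linarith [norm_sub_norm_le x y, mem_closedBall_iff_norm'.1 hy, norm_nonneg y]
    calc ‖fderiv ℝ f y‖ ≤ C * ((1 + ‖y‖) ^ k)⁻¹ := hC y
      _ = C * 2 ^ k * ((2 * (1 + ‖y‖)) ^ k)⁻¹ := by rw [mul_pow]; field_simp
      _ ≤ C * 2 ^ k * ((1 + ‖x‖) ^ k)⁻¹ := by gcongr
  simpa [schwartzFwdDiff_apply] using
    (convex_closedBall x 1).norm_image_sub_le_of_norm_fderiv_le (fun y _ ↦ f.differentiableAt)
      hball (Metric.mem_closedBall_self zero_le_one) (y := x + e) (by simpa using he)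

lemma tendsto_integral_sq_norm_schwartzFwdDiff [MeasurableSpace E] [BorelSpace E]
    {μ : Measure E} [μ.HasTemperateGrowth] (f : SchwartzMap E F) (v : E) :
    Tendsto (fun h : ℝ ↦ (h⁻¹) ^ 2 * ∫ x, ‖schwartzFwdDiff (h • v) f x‖ ^ 2 ∂μ) (𝓝[≠] 0)
      (𝓝 (∫ x, ‖fderiv ℝ f x v‖ ^ 2 ∂μ)) := by
  obtain ⟨C, hC⟩ := exists_norm_schwartzFwdDiff_le f μ.integrablePower
  have hsq : ∀ h x, (h⁻¹) ^ 2 * ‖schwartzFwdDiff (h • v) f x‖ ^ 2 =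
      ‖h⁻¹ • schwartzFwdDiff (h • v) f x‖ ^ 2 := fun h x ↦ by
    rw [norm_smul, mul_pow, Real.norm_eq_abs, sq_abs]
  have hsmall : ∀ᶠ h : ℝ in 𝓝[≠] 0, ‖h • v‖ < 1 :=
    nhdsWithin_le_nhds (Continuous.tendsto' (by fun_prop) 0 0 (by simp) |>.eventually_lt_const
      one_pos)
  simp_rw [← integral_const_mul, hsq]
  refine tendsto_integral_filter_of_dominated_convergence
    (fun x ↦ (C * ‖v‖) ^ 2 * (1 + ‖x‖) ^ (-(μ.integrablePower : ℝ))) (.of_forall fun h ↦ ?_) ?_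
    (μ.integrable_pow_neg_integrablePower.const_mul _) (.of_forall fun x ↦ ?_)
  · exact (((schwartzFwdDiff _ f).continuous.const_smul _).norm.pow 2).aestronglyMeasurable
  · filter_upwards [hsmall, self_mem_nhdsWithin] with h hv hh
    refine .of_forall fun x ↦ ?_
    set k := μ.integrablePower
    have hquot : ‖h⁻¹ • schwartzFwdDiff (h • v) f x‖ ≤ C * ((1 + ‖x‖) ^ k)⁻¹ * ‖v‖ := by
      rw [norm_smul, norm_inv, inv_mul_le_iff₀ (norm_pos_iff.2 hh)]
      calc _ ≤ _ := hC (h • v) hv.le x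
        _ = _ := by rw [norm_smul]; ring
    have hdecay : (((1 + ‖x‖) ^ k)⁻¹) ^ 2 ≤ ((1 + ‖x‖) ^ k)⁻¹ :=
      pow_le_of_le_one (by positivity)
        (inv_le_one_of_one_le₀ (one_le_pow₀ (by linarith [norm_nonneg x]))) two_ne_zero
    rw [Real.rpow_neg (by positivity), Real.rpow_natCast, norm_pow, norm_norm]
    calc _ ≤ (C * ((1 + ‖x‖) ^ k)⁻¹ * ‖v‖) ^ 2 := by gcongr
      _ = (C * ‖v‖) ^ 2 * (((1 + ‖x‖) ^ k)⁻¹) ^ 2 := by ring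
      _ ≤ _ := by gcongr
  · have := (f.differentiableAt (x := x)).hasFDerivAt.hasLineDerivAt v
    simpa only [schwartzFwdDiff_apply] using (this.tendsto_slope_zero.norm.pow 2)

lemma integral_sq_norm_schwartzFwdDiff_le [MeasurableSpace E] [BorelSpace E]
    [SecondCountableTopology E] {μ : Measure E} [μ.HasTemperateGrowth] [μ.IsAddRightInvariant]
    (e : E) (f : SchwartzMap E F) :
    ∫ x, ‖schwartzFwdDiff e f x‖ ^ 2 ∂μ ≤ 4 * ∫ x, ‖f x‖ ^ 2 ∂μ := by
  have hf : Integrable (fun x ↦ 2 * ‖f x‖ ^ 2) μ := (integrable_sq_norm f).const_mul 2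
  have hshift : Integrable (fun x ↦ 2 * ‖f (x + e)‖ ^ 2) μ := hf.comp_add_right e
  calc ∫ x, ‖schwartzFwdDiff e f x‖ ^ 2 ∂μ
      ≤ ∫ x, (2 * ‖f (x + e)‖ ^ 2 + 2 * ‖f x‖ ^ 2) ∂μ := by
        refine integral_mono (integrable_sq_norm _) (hshift.add hf) fun x ↦ ?_
        rw [schwartzFwdDiff_apply, ← mul_add]
        exact (pow_le_pow_left₀ (norm_nonneg _) (norm_sub_le _ _) 2).trans add_sq_le
    _ = 4 * ∫ x, ‖f x‖ ^ 2 ∂μ := by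
        rw [integral_add hshift hf, integral_add_right_eq_self (fun x ↦ 2 * ‖f x‖ ^ 2),
          integral_const_mul]
        ring

variable {d : ℕ} (e : Ed d) (f : SchwartzMap (Ed d) ℂ)

lemma pd_schwartzFwdDiff (i : Fin d) :
    pd (schwartzFwdDiff e f) i = schwartzFwdDiff e (∂_{stdBasis i} f) :=
  congrArg DFunLike.coe (lineDerivOp_schwartzFwdDiff e (stdBasis i) f)

lemma lap_schwartzFwdDiff (x : Ed d) :
    lap (schwartzFwdDiff e f) x = lap f (x + e) - lap f x := by
  simp only [lap, pd_schwartzFwdDiff, schwartzFwdDiff_apply, Finset.sum_sub_distrib]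
  rfl

lemma gradEnergy_schwartzFwdDiff_le : gradEnergy (schwartzFwdDiff e f) ≤ 4 * gradEnergy f := by
  simp only [gradEnergy_eq_sum, pd_schwartzFwdDiff, Finset.mul_sum]
  exact Finset.sum_le_sum fun i _ ↦ integral_sq_norm_schwartzFwdDiff_le e (∂_{stdBasis i} f)

end DifferenceQuotients

namespace IsLinSchrodSol

variable {d : ℕ} {u : ℝ → SchwartzMap (Ed d) ℂ}

lemma hasDerivAt (hu : IsLinSchrodSol d u) (t : ℝ) (x : Ed d) :
    HasDerivAt (fun s ↦ u s x) (Complex.I * lap (u t) x) t := by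
  have hdiff : Differentiable ℝ fun s ↦ u s x :=
    (hu.1.differentiable (by simp)).comp (f := fun s : ℝ ↦ (s, x)) (by fun_prop)
  exact hu.2 t x ▸ (hdiff t).hasDerivAt

lemma continuous_I_mul_lap (hu : IsLinSchrodSol d u) :
    Continuous fun p : ℝ × Ed d ↦ Complex.I * lap (u p.1) p.2 := by
  have hfderiv : ∀ p : ℝ × Ed d, Complex.I * lap (u p.1) p.2 =
      fderiv ℝ (fun q : ℝ × Ed d ↦ u q.1 q.2) p (1, 0) := by
    intro p
    have htime : HasDerivAt (fun s : ℝ ↦ (s, p.2)) (1, 0) p.1 :=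
      (hasDerivAt_id p.1).prodMk (hasDerivAt_const _ p.2)
    have hdiff : DifferentiableAt ℝ (fun q : ℝ × Ed d ↦ u q.1 q.2) (p.1, p.2) :=
      hu.1.differentiable (by simp) p
    have hchain := hdiff.hasFDerivAt.comp_hasDerivAt p.1 htime
    exact (hu.hasDerivAt p.1 p.2).unique hchain
  simp_rw [hfderiv]
  exact (hu.1.continuous_fderiv (by simp)).clm_apply continuous_const

lemma continuous_pd (hu : IsLinSchrodSol d u) (i : Fin d) :
    Continuous fun p : ℝ × Ed d ↦ pd (u p.1) i p.2 := by
  have hfderiv : ∀ p : ℝ × Ed d, pd (u p.1) i p.2 =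
      fderiv ℝ (fun q : ℝ × Ed d ↦ u q.1 q.2) p (0, stdBasis i) := by
    intro p
    have hdiff : DifferentiableAt ℝ (fun q : ℝ × Ed d ↦ u q.1 q.2) (p.1, p.2) :=
      hu.1.differentiable (by simp) p
    have hspace : HasFDerivAt (u p.1) _ p.2 :=
      hdiff.hasFDerivAt.comp p.2 (hasFDerivAt_prodMk_right p.1 p.2)
    simp [pd, hspace.fderiv]
  simp_rw [hfderiv]
  exact (hu.1.continuous_fderiv (by simp)).clm_apply continuous_const

lemma lowerSemicontinuous_gradEnergy (hu : IsLinSchrodSol d u) :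
    LowerSemicontinuous fun t ↦ gradEnergy (u t) := by
  have hcont : Continuous fun p : ℝ × Ed d ↦ gradNormSq (u p.1) p.2 :=
    continuous_finsetSum _ fun i _ ↦ (hu.continuous_pd i).norm.pow 2
  exact lowerSemicontinuous_integral_of_nonneg hcont (fun t ↦ gradNormSq_nonneg (u t))
    fun t ↦ integrable_gradNormSq (u t)

lemma hasDerivAt_localizedMass (hu : IsLinSchrodSol d u) {ψ : Ed d → ℝ} (hψ : Continuous ψ)
    (hψc : HasCompactSupport ψ) (t : ℝ) :
    HasDerivAt (fun s ↦ localizedMass ψ (u s))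
      (2 * ∫ x, ψ x ^ 2 * ⟪u t x, Complex.I * lap (u t) x⟫) t := by
  have hψ2c : HasCompactSupport fun x ↦ ψ x ^ 2 := hψc.comp_left (g := (· ^ 2)) (by simp)
  have := hasDerivAt_integral_mul_of_hasCompactSupport (μ := volume) (hψ.pow 2) hψ2c
    (fun s ↦ (u s).continuous.norm.pow 2)
    (continuous_const.mul (hu.1.continuous.inner hu.continuous_I_mul_lap))
    (fun s x ↦ (hu.hasDerivAt s x).norm_sq) t
  simpa only [mul_left_comm _ (2 : ℝ), integral_const_mul, Pi.pow_apply] using! this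

lemma abs_sqrt_localizedMass_sub_le_of_hasCompactSupport (hu : IsLinSchrodSol d u)
    {ψ : Ed d → ℝ} (hψ : ContDiff ℝ 1 ψ) (hψc : HasCompactSupport ψ) {Λ : ℝ}
    (hΛ : ∀ x, ‖fderiv ℝ ψ x‖ ≤ Λ) {a b B : ℝ} (hab : a ≤ b)
    (hB : ∀ s ∈ Set.Icc a b, gradEnergy (u s) ≤ B) :
    |√(localizedMass ψ (u b)) - √(localizedMass ψ (u a))| ≤ 2 * Λ * √B * (b - a) := by
  have hΛ0 : 0 ≤ Λ := (norm_nonneg _).trans (hΛ 0)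
  refine abs_sqrt_sub_sqrt_le_of_abs_deriv_le hab (by positivity)
    (fun s _ ↦ localizedMass_nonneg ψ (u s))
    (fun s _ ↦ (hu.hasDerivAt_localizedMass hψ.continuous hψc s).hasDerivWithinAt) fun s hs ↦ ?_
  rw [abs_mul, abs_two]
  calc _ ≤ 2 * (2 * Λ * (√(localizedMass ψ (u s)) * √(gradEnergy (u s)))) := by
        gcongr
        exact abs_integral_sq_mul_inner_I_mul_lap_le ((u s).smooth 2) (integrable_gradNormSq _)
          hψ hψc hΛ
    _ ≤ 2 * (2 * Λ * (√(localizedMass ψ (u s)) * √B)) := by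
        gcongr
        exact hB s hs
    _ = _ := by ring

theorem abs_sqrt_localizedMass_sub_le (hu : IsLinSchrodSol d u) {φ : Ed d → ℝ}
    (hφ : ContDiff ℝ 1 φ) {L : ℝ} (hL : ∀ x, ‖fderiv ℝ φ x‖ ≤ L) {a b B : ℝ}
    (hB : ∀ s ∈ Set.uIcc a b, gradEnergy (u s) ≤ B) :
    |√(localizedMass φ (u b)) - √(localizedMass φ (u a))| ≤ 2 * L * √B * |b - a| := by
  wlog hab : a ≤ b generalizing a b
  · rw [abs_sub_comm, abs_sub_comm b]
    exact this (Set.uIcc_comm a b ▸ hB) (le_of_not_ge hab)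
  rw [Set.uIcc_of_le hab] at hB
  rw [abs_of_nonneg (sub_nonneg.2 hab)]
  have hφd : Differentiable ℝ φ := hφ.differentiable one_ne_zero
  have hmass : ∀ s, Tendsto (fun R ↦ √(localizedMass (truncatedWeight φ R) (u s))) atTop
      (𝓝 √(localizedMass φ (u s))) := fun s ↦
    (tendsto_localizedMass_truncatedWeight (u s).continuous hφ
      (integrable_sq_mul_sq_norm (u s) hφd hL)).sqrt
  obtain ⟨D, hD⟩ := exists_norm_fderiv_truncatedWeight_le hφd hL
  have hgrad : Tendsto (fun R ↦ L + D / R) atTop (𝓝 L) := by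
    simpa using (tendsto_const_nhds.div_atTop tendsto_id).const_add L
  refine le_of_tendsto_of_tendsto ((hmass b).sub (hmass a)).abs
    (((hgrad.const_mul 2).mul_const √B).mul_const (b - a)) ?_
  filter_upwards [eventually_gt_atTop 0] with R hR
  exact hu.abs_sqrt_localizedMass_sub_le_of_hasCompactSupport (contDiff_truncatedWeight hφ R)
    (hasCompactSupport_truncatedWeight φ hR.ne') (hD R hR) hab hB

lemma integral_sq_norm_eq_of_gradEnergy_le (hu : IsLinSchrodSol d u) {a b B : ℝ}
    (hB : ∀ s ∈ Set.uIcc a b, gradEnergy (u s) ≤ B) :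
    ∫ x, ‖u a x‖ ^ 2 = ∫ x, ‖u b x‖ ^ 2 := by
  have h := hu.abs_sqrt_localizedMass_sub_le (φ := fun _ ↦ 1) contDiff_const (L := 0) (by simp) hB
  rw [mul_zero, zero_mul, zero_mul, abs_nonpos_iff, sub_eq_zero,
    Real.sqrt_inj (localizedMass_nonneg _ _) (localizedMass_nonneg _ _)] at h
  simpa [localizedMass] using h.symm

lemma schwartzFwdDiff (hu : IsLinSchrodSol d u) (e : Ed d) :
    IsLinSchrodSol d fun t ↦ schwartzFwdDiff e (u t) := by
  refine ⟨?_, fun t x ↦ ?_⟩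
  · have hshift : ContDiff ℝ (⊤ : ℕ∞) fun p : ℝ × Ed d ↦ (p.1, p.2 + e) := by fun_prop
    simpa only [schwartzFwdDiff_apply] using! (hu.1.comp hshift).sub hu.1
  · simp only [schwartzFwdDiff_apply, lap_schwartzFwdDiff, mul_sub]
    exact ((hu.hasDerivAt t (x + e)).sub (hu.hasDerivAt t x)).deriv

/- The energy is the limit of the masses of the difference quotients of `u`, which solve the same
equation and inherit a bound on their energy. -/
lemma gradEnergy_eq_of_bddAbove (hu : IsLinSchrodSol d u) {a b : ℝ}
    (h : BddAbove ((fun s ↦ gradEnergy (u s)) '' Set.uIcc a b)) :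
    gradEnergy (u a) = gradEnergy (u b) := by
  obtain ⟨B, hB⟩ := h
  rw [gradEnergy_eq_sum, gradEnergy_eq_sum]
  refine Finset.sum_congr rfl fun i _ ↦ ?_
  refine tendsto_nhds_unique (tendsto_integral_sq_norm_schwartzFwdDiff (u a) (stdBasis i))
    ((tendsto_integral_sq_norm_schwartzFwdDiff (u b) (stdBasis i)).congr fun h ↦ ?_)
  congr 1
  refine ((hu.schwartzFwdDiff (h • stdBasis i)).integral_sq_norm_eq_of_gradEnergy_le (B := 4 * B)
    fun s hs ↦ ?_).symm
  exact (gradEnergy_schwartzFwdDiff_le _ (u s)).trans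
    (mul_le_mul_of_nonneg_left (hB (Set.mem_image_of_mem _ hs)) zero_le_four)

theorem gradEnergy_eq (hu : IsLinSchrodSol d u) (a b : ℝ) :
    gradEnergy (u a) = gradEnergy (u b) :=
  eq_of_lowerSemicontinuous_of_bddAbove_imp_eq hu.lowerSemicontinuous_gradEnergy
    (fun _ _ h ↦ hu.gradEnergy_eq_of_bddAbove h) a b

end IsLinSchrodSol

lemma L2_ofReal_mul {d : ℕ} (φ : Ed d → ℝ) (f : Ed d → ℂ) :
    L2 (fun x ↦ (φ x : ℂ) * f x) = √(localizedMass φ f) := by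
  simp [L2, localizedMass, Real.sqrt_eq_rpow, mul_pow]

lemma gradL2_eq_sqrt_gradEnergy {d : ℕ} (f : Ed d → ℂ) : gradL2 f = √(gradEnergy f) :=
  (Real.sqrt_eq_rpow _).symm

theorem localized_mass_growth_linear_general {d : ℕ} {u : ℝ → SchwartzMap (Ed d) ℂ}
    (hu : IsLinSchrodSol d u) {φ : Ed d → ℝ} {L : ℝ} (hφ : ContDiff ℝ 1 φ)
    (hφgrad : ∀ x, ‖fderiv ℝ φ x‖ ≤ L) (t : ℝ) :
    L2 (fun x ↦ (φ x : ℂ) * u t x) ≤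
      L2 (fun x ↦ (φ x : ℂ) * u 0 x) + 2 * |t| * L * gradL2 (u 0) := by
  have hgrowth := hu.abs_sqrt_localizedMass_sub_le hφ hφgrad (a := 0) (b := t)
    fun s _ ↦ (hu.gradEnergy_eq s 0).le
  rw [L2_ofReal_mul, L2_ofReal_mul, gradL2_eq_sqrt_gradEnergy]
  calc √(localizedMass φ (u t))
      ≤ √(localizedMass φ (u 0)) + 2 * L * √(gradEnergy (u 0)) * |t - 0| := by
        linarith [le_abs_self (√(localizedMass φ (u t)) - √(localizedMass φ (u 0)))]
    _ = _ := by rw [sub_zero]; ring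

/-- For a Schwartz solution of the linear Schrödinger equation and a bounded
`C¹` function `φ` with `sup |∇φ| ≤ L`, one has
`‖φ u(t)‖₂ ≤ ‖φ u(0)‖₂ + 2 t L ‖∇u(0)‖₂` for all `t ≥ 0`. -/
theorem localized_mass_growth_linear
    {d : ℕ} (hd : 1 ≤ d) (u : ℝ → SchwartzMap (Ed d) ℂ)
    (hu : IsLinSchrodSol d u)
    (φ : Ed d → ℝ) (L : ℝ) (hφ : ContDiff ℝ 1 φ)
    (hφbdd : ∃ C, ∀ x, |φ x| ≤ C)
    (hφgrad : ∀ x, ‖fderiv ℝ φ x‖ ≤ L)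
    (t : ℝ) (ht : 0 ≤ t) :
    L2 (fun x => (φ x : ℂ) * u t x) ≤
      L2 (fun x => (φ x : ℂ) * u 0 x) + 2 * t * L * gradL2 (fun x => u 0 x) := by
  simpa only [abs_of_nonneg ht] using localized_mass_growth_linear_general hu hφ hφgrad t
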